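/- Let X be a complex Banach space, T a bounded linear operator on X, β an ordinal, and m ≥ 1 an integer. Then T is g_σ^{β+1}-invertible if and only if T^m is g_σ^{β+1}-invertible. -/

import Mathlib

open Ordinal Set

/-- The `α`-th Cantor–Bendixson derivative of a set `A ⊆ ℂ`, defined by transfinite
recursion: `cbd A 0 = A`, `cbd A (β+1) = derivedSet (cbd A β)` (the set of accumulation
points of `cbd A β`), and `cbd A α = ⋂_{β < α} cbd A β` for limit ordinals `α`. -/
noncomputable def cbd (A : Set ℂ) (α : Ordinal) : Set ℂ :=
  Ordinal.limitRecOn α A (fun _ ih => derivedSet ih)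
    (fun α _ ih => ⋂ (β : Set.Iio α), ih β.1 β.2)

variable {X : Type*} [NormedAddCommGroup X] [NormedSpace ℂ X] [CompleteSpace X]

/-- The restriction `T_M` of a bounded operator `T` to a `T`-invariant subspace `M`. -/
noncomputable def restr (T : X →L[ℂ] X) (M : Submodule ℂ X)
    (hM : ∀ x ∈ M, T x ∈ M) : M →L[ℂ] M :=
  { toLinearMap := T.toLinearMap.restrict hM
    cont := (T.continuous.comp continuous_subtype_val).subtype_mk _ }


/-- `T` is `g_σ^{β+1}`-invertible: there is `(M, N) ∈ Red T` (a pair of closed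
`T`-invariant subspaces with `X = M ⊕ N`) such that `T_M` is invertible and
`acc^β σ(T_N) ⊆ {0}`. -/
def GInv (β : Ordinal) (T : X →L[ℂ] X) : Prop :=
  ∃ (M N : Submodule ℂ X) (hM : ∀ x ∈ M, T x ∈ M) (hN : ∀ x ∈ N, T x ∈ N),
    IsClosed (M : Set X) ∧ IsClosed (N : Set X) ∧ IsCompl M N ∧
    IsUnit (restr T M hM) ∧ cbd (spectrum ℂ (restr T N hN)) β ⊆ {0}

/-!
`T` is `g_σ^{β+1}`-invertible iff `0` is not in `acc^{β+1} σ(T)`. The forward direction holds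
because the spectrum of a direct sum is the union of the spectra. Conversely,
`σ(T) \ acc^β σ(T)` is countable by Cantor–Bendixson, so if `0` is not an accumulation point of
`acc^β σ(T)`, then arbitrarily small circles around `0` miss `σ(T)`, and the Riesz projection of
such a circle splits `X`. Derivatives of compact sets commute with continuous maps whose fibres are
discrete, such as `z ↦ z ^ m`, so by spectral mapping `acc^{β+1} σ(T ^ m)` consists of the `m`-th
powers of the elements of `acc^{β+1} σ(T)`, and `0` lies in the one iff it lies in the other.

No contour integral is needed for the Riesz projection of the unit circle: averaging
`θ ↦ (1 - e^{iθ} a)⁻¹` over the two square roots of `e^{iθ}` replaces `a` by `a ^ 2` and halves the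
Lipschitz constant, so that `(1 - e^{iθ} a ^ 2 ^ n)⁻¹` converges to a limit independent of `θ`.
-/

open Filter Topology Metric NNReal Pointwise

section Topology

variable {Y Z : Type*} [TopologicalSpace Y] [TopologicalSpace Z] {f : Y → Z}

theorem derivedSet_image_subset [T2Space Z] {K : Set Y} (hK : IsCompact K) (hf : Continuous f) :
    derivedSet (f '' K) ⊆ f '' derivedSet K := by
  intro w hw
  set F : Filter Y := comap f (𝓝[≠] w) ⊓ 𝓟 K
  have hF : F.NeBot := by
    rw [← map_neBot_iff f, Filter.push_pull', map_principal]
    exact hw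
  obtain ⟨a, -, ha⟩ := hK (show F ≤ 𝓟 K from inf_le_right)
  have hfF : Tendsto f F (𝓝[≠] w) := tendsto_comap.mono_left inf_le_left
  have hfa : f a = w :=
    have : (𝓝 a ⊓ F).NeBot := ha
    tendsto_nhds_unique (hf.continuousAt.mono_left inf_le_left)
      ((hfF.mono_left inf_le_right).mono_right nhdsWithin_le_nhds)
  have hFa : F ≤ 𝓟 {a}ᶜ := le_principal_iff.2 <| by
    filter_upwards [hfF self_mem_nhdsWithin] with z hz hza
    exact hz (hza ▸ hfa)
  exact ⟨a, accPt_iff_clusterPt.2 (ha.mono (le_inf hFa inf_le_right)), hfa⟩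

theorem image_derivedSet_subset (hf : Continuous f) (hfib : ∀ a, ∀ᶠ z in 𝓝[≠] a, f z ≠ f a)
    (A : Set Y) : f '' derivedSet A ⊆ derivedSet (f '' A) := by
  rintro _ ⟨a, ha, rfl⟩
  have hne : Tendsto f (𝓝[≠] a) (𝓝[≠] (f a)) :=
    tendsto_nhdsWithin_iff.2 ⟨hf.continuousAt.mono_left nhdsWithin_le_nhds, hfib a⟩
  have hA : Tendsto f (𝓟 A) (𝓟 (f '' A)) := tendsto_principal_principal.2 fun _ ↦ mem_image_of_mem f
  have : (𝓝[≠] a ⊓ 𝓟 A).NeBot := ha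
  exact (hne.inf hA).neBot

theorem derivedSet_image [T2Space Z] {K : Set Y} (hK : IsCompact K) (hf : Continuous f)
    (hfib : ∀ a, ∀ᶠ z in 𝓝[≠] a, f z ≠ f a) : derivedSet (f '' K) = f '' derivedSet K :=
  (derivedSet_image_subset hK hf).antisymm (image_derivedSet_subset hf hfib K)

theorem iInter_image_subset_image_iInter [T1Space Z] {ι : Type*} [Nonempty ι] {s : ι → Set Y}
    (hs : Directed (· ⊇ ·) s) (hcomp : ∀ i, IsCompact (s i)) (hcl : ∀ i, IsClosed (s i))
    (hf : Continuous f) : ⋂ i, f '' s i ⊆ f '' ⋂ i, s i := by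
  intro w hw
  have hfib (i : ι) : IsClosed (s i ∩ f ⁻¹' {w}) :=
    (hcl i).inter (isClosed_singleton.preimage hf)
  have hdir : Directed (· ⊇ ·) fun i ↦ s i ∩ f ⁻¹' {w} :=
    Directed.mono_comp (· ⊇ ·) (g := (· ∩ f ⁻¹' {w})) (fun _ _ h ↦ inter_subset_inter_left _ h) hs
  obtain ⟨a, ha⟩ := IsCompact.nonempty_iInter_of_directed_nonempty_isCompact_isClosed _ hdir
    (fun i ↦ mem_iInter.1 hw i)
    (fun i ↦ (hcomp i).of_isClosed_subset (hfib i) inter_subset_left) hfib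
  rw [mem_iInter] at ha
  exact ⟨a, mem_iInter.2 fun i ↦ (ha i).1, (ha (Classical.arbitrary ι)).2⟩

theorem eventually_pow_ne_pow {R : Type*} [CommRing R] [IsDomain R] [TopologicalSpace R]
    [T1Space R] {m : ℕ} (hm : m ≠ 0) (a : R) : ∀ᶠ z in 𝓝[≠] a, z ^ m ≠ a ^ m := by
  classical
  have hfin : {z : R | z ^ m = a ^ m}.Finite := by
    refine (Polynomial.nthRoots m (a ^ m)).toFinset.finite_toSet.subset fun z hz ↦ ?_
    simpa [Polynomial.mem_nthRoots (Nat.pos_of_ne_zero hm)] using hz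
  have hnhds : ({z : R | z ^ m = a ^ m} \ {a})ᶜ ∈ 𝓝 a :=
    (hfin.sdiff).isClosed.isOpen_compl.mem_nhds (by simp)
  filter_upwards [mem_nhdsWithin_of_mem_nhds hnhds, self_mem_nhdsWithin] with z hz hza h
  exact hz ⟨h, hza⟩

theorem exists_mem_Ioo_disjoint_sphere {E : Type*} [PseudoMetricSpace E] {C : Set E}
    (hC : C.Countable) (x : E) {r : ℝ} (hr : 0 < r) : ∃ s ∈ Ioo 0 r, Disjoint C (sphere x s) := by
  obtain ⟨s, hsC, hs⟩ := ((hC.image (dist · x)).dense_compl ℝ).exists_between hr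
  exact ⟨s, hs, disjoint_left.2 fun z hzC hzs ↦ hsC ⟨z, hzC, hzs⟩⟩

end Topology

section CantorBendixson

variable {A B D : Set ℂ}

theorem cbd_zero (A : Set ℂ) : cbd A 0 = A :=
  limitRecOn_zero ..

theorem cbd_add_one (A : Set ℂ) (α : Ordinal) : cbd A (α + 1) = derivedSet (cbd A α) :=
  limitRecOn_add_one ..

theorem cbd_of_isSuccLimit (A : Set ℂ) {α : Ordinal} (hα : Order.IsSuccLimit α) :
    cbd A α = ⋂ β : Iio α, cbd A β :=
  limitRecOn_limit _ _ _ _ hα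

theorem cbd_mono (h : A ⊆ B) (α : Ordinal) : cbd A α ⊆ cbd B α := by
  induction α using limitRecOn with
  | zero => simpa only [cbd_zero] using h
  | add_one α ih => simpa only [cbd_add_one] using derivedSet_mono _ _ ih
  | limit α hα ih =>
    simpa only [cbd_of_isSuccLimit _ hα] using iInter_mono fun β : Iio α ↦ ih β β.2

theorem isClosed_cbd (hA : IsClosed A) (α : Ordinal) : IsClosed (cbd A α) := by
  induction α using limitRecOn with
  | zero => simpa only [cbd_zero] using hA
  | add_one α _ => simpa only [cbd_add_one] using isClosed_derivedSet _
  | limit α hα ih =>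
    simpa only [cbd_of_isSuccLimit _ hα] using isClosed_iInter fun β : Iio α ↦ ih β β.2

theorem cbd_antitone (hA : IsClosed A) : Antitone (cbd A) := by
  intro γ α hγα
  induction α using limitRecOn with
  | zero => rw [nonpos_iff_eq_zero.1 hγα]
  | add_one α ih =>
    rcases hγα.eq_or_lt with rfl | hlt
    · rfl
    · rw [cbd_add_one]
      exact ((isClosed_iff_derivedSet_subset _).1 (isClosed_cbd hA α)).trans
        (ih (Order.lt_add_one_iff.1 hlt))
  | limit α hα ih =>
    rcases hγα.eq_or_lt with rfl | hlt
    · rfl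
    · rw [cbd_of_isSuccLimit _ hα]
      exact iInter_subset (fun β : Iio α ↦ cbd A β) ⟨γ, hlt⟩

theorem cbd_subset (hA : IsClosed A) (α : Ordinal) : cbd A α ⊆ A :=
  (cbd_antitone hA (zero_le (a := α))).trans_eq (cbd_zero A)

theorem isCompact_cbd (hA : IsCompact A) (α : Ordinal) : IsCompact (cbd A α) :=
  hA.of_isClosed_subset (isClosed_cbd hA.isClosed α) (cbd_subset hA.isClosed α)

theorem cbd_union (hA : IsClosed A) (hB : IsClosed B) (α : Ordinal) :
    cbd (A ∪ B) α = cbd A α ∪ cbd B α := by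
  induction α using limitRecOn with
  | zero => simp only [cbd_zero]
  | add_one α ih => simp only [cbd_add_one, ih, derivedSet_union]
  | limit α hα ih =>
    simp only [cbd_of_isSuccLimit _ hα]
    exact (iInter_congr fun β : Iio α ↦ ih β β.2).trans <|
      iInter_union_of_antitone (fun _ _ h ↦ cbd_antitone hA h) fun _ _ h ↦ cbd_antitone hB h

theorem cbd_image {f : ℂ → ℂ} (hA : IsCompact A) (hf : Continuous f)
    (hfib : ∀ a, ∀ᶠ z in 𝓝[≠] a, f z ≠ f a) (α : Ordinal) : cbd (f '' A) α = f '' cbd A α := by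
  induction α using limitRecOn with
  | zero => simp only [cbd_zero]
  | add_one α ih => rw [cbd_add_one, cbd_add_one, ih, derivedSet_image (isCompact_cbd hA α) hf hfib]
  | limit α hα ih =>
    simp only [cbd_of_isSuccLimit _ hα]
    rw [iInter_congr fun β : Iio α ↦ ih β β.2]
    have : Nonempty (Iio α) := ⟨⟨0, pos_iff_ne_zero.2 hα.ne_bot⟩⟩
    have hanti : Antitone fun β : Iio α ↦ cbd A β := fun _ _ h ↦ cbd_antitone hA.isClosed h
    exact (iInter_image_subset_image_iInter hanti.directed_ge (fun β ↦ isCompact_cbd hA β)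
      (fun β ↦ isClosed_cbd hA.isClosed β) hf).antisymm (image_iInter_subset _ _)

theorem subset_cbd_of_perfect (hD : Perfect D) (hDA : D ⊆ A) (α : Ordinal) : D ⊆ cbd A α := by
  induction α using limitRecOn with
  | zero => rwa [cbd_zero]
  | add_one α ih =>
    rw [cbd_add_one, perfect_iff_eq_derivedSet.1 hD]
    exact derivedSet_mono _ _ ih
  | limit α hα ih =>
    rw [cbd_of_isSuccLimit _ hα]
    exact subset_iInter fun β ↦ ih β β.2

theorem countable_diff_cbd (hA : IsClosed A) (α : Ordinal) : (A \ cbd A α).Countable := by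
  obtain ⟨V, D, hV, hD, rfl⟩ := exists_countable_union_perfect_of_isClosed hA
  exact hV.mono fun z hz ↦ hz.1.resolve_right fun hzD ↦
    hz.2 (subset_cbd_of_perfect hD subset_union_right α hzD)

theorem exists_sphere_disjoint_of_zero_notMem_cbd (hA : IsClosed A) {α : Ordinal}
    (h : (0 : ℂ) ∉ cbd A (α + 1)) :
    ∃ s > 0, Disjoint A (sphere 0 s) ∧ cbd A α ∩ ball 0 s ⊆ {0} := by
  rw [cbd_add_one, mem_derivedSet, accPt_iff_nhds] at h
  push Not at h
  obtain ⟨U, hU, hUA⟩ := h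
  obtain ⟨r, hr, hrU⟩ := Metric.mem_nhds_iff.1 hU
  have hrA : cbd A α ∩ ball 0 r ⊆ {0} := fun z hz ↦ hUA z ⟨hrU hz.2, hz.1⟩
  obtain ⟨s, ⟨hs, hsr⟩, hsA⟩ := exists_mem_Ioo_disjoint_sphere (countable_diff_cbd hA α) (0 : ℂ) hr
  refine ⟨s, hs, disjoint_left.2 fun z hzA hzs ↦ ?_,
    (inter_subset_inter_right _ (ball_subset_ball hsr.le)).trans hrA⟩
  have hz : z ∉ cbd A α := fun hz ↦
    ne_of_mem_sphere hzs hs.ne' (hrA ⟨hz, sphere_subset_ball hsr hzs⟩)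
  exact disjoint_left.1 hsA ⟨hzA, hz⟩ hzs

end CantorBendixson

section DyadicMean

variable {E : Type*} [NormedAddCommGroup E] [NormedSpace ℝ E] {f : ℝ → E}

/-- The transfer operator of the angle-doubling map `θ ↦ 2θ`: it replaces the value of `f` at `θ`
by the mean of its values at the two preimages `θ / 2` and `θ / 2 + π` of `θ` modulo `2π`. -/
noncomputable def dyadicMean (f : ℝ → E) (θ : ℝ) : E :=
  (2 : ℝ)⁻¹ • (f (θ / 2) + f (θ / 2 + Real.pi))

theorem lipschitzWith_dyadicMean {K : ℝ≥0} (hf : LipschitzWith K f) :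
    LipschitzWith (K / 2) (dyadicMean f) := by
  refine LipschitzWith.of_dist_le_mul fun θ φ ↦ ?_
  have hhalf : dist (θ / 2) (φ / 2) = dist θ φ / 2 := by
    rw [Real.dist_eq, Real.dist_eq, ← _root_.sub_div, abs_div, abs_two]
  calc dist (dyadicMean f θ) (dyadicMean f φ)
      ≤ 2⁻¹ * (dist (f (θ / 2)) (f (φ / 2)) +
          dist (f (θ / 2 + Real.pi)) (f (φ / 2 + Real.pi))) := by
        rw [dyadicMean, dyadicMean, dist_smul₀, norm_inv, Real.norm_two]
        gcongr
        exact dist_add_add_le _ _ _ _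
    _ ≤ 2⁻¹ * (K * (dist θ φ / 2) + K * (dist θ φ / 2)) := by
        gcongr
        · exact hhalf ▸ hf.dist_le_mul _ _
        · exact hhalf ▸ dist_add_right (θ / 2) (φ / 2) Real.pi ▸ hf.dist_le_mul _ _
    _ = ↑(K / 2) * dist θ φ := by push_cast; ring

theorem lipschitzWith_iterate_dyadicMean {K : ℝ≥0} (hf : LipschitzWith K f) (n : ℕ) :
    LipschitzWith (K / 2 ^ n) (dyadicMean^[n] f) := by
  induction n with
  | zero => simpa using hf
  | succ n ih =>
    rw [Function.iterate_succ_apply', pow_succ, ← div_div]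
    exact lipschitzWith_dyadicMean ih

theorem exists_tendsto_iterate_dyadicMean [CompleteSpace E] {K : ℝ≥0} (hf : LipschitzWith K f) :
    ∃ p, ∀ θ, Tendsto (fun n ↦ dyadicMean^[n] f θ) atTop (𝓝 p) := by
  have hdist (n : ℕ) (θ φ : ℝ) :
      dist (dyadicMean^[n] f θ) (dyadicMean^[n] f φ) ≤ K / 2 ^ n * dist θ φ := by
    simpa using (lipschitzWith_iterate_dyadicMean hf n).dist_le_mul θ φ
  have hstep (n : ℕ) : dist (dyadicMean^[n] f 0) (dyadicMean^[n + 1] f 0) =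
      dist (dyadicMean^[n] f 0) (dyadicMean^[n] f Real.pi) / 2 := by
    have : dyadicMean^[n + 1] f 0 = midpoint ℝ (dyadicMean^[n] f 0) (dyadicMean^[n] f Real.pi) := by
      rw [Function.iterate_succ_apply', dyadicMean, midpoint_eq_smul_add, invOf_eq_inv,
        _root_.zero_div, _root_.zero_add]
    rw [this, dist_left_midpoint, Real.norm_two, inv_mul_eq_div]
  obtain ⟨p, hp⟩ := cauchySeq_tendsto_of_complete <|
    cauchySeq_of_le_geometric_two (f := fun n ↦ dyadicMean^[n] f 0)
      (C := K * dist (0 : ℝ) Real.pi) fun n ↦ by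
      rw [hstep, div_right_comm _ (2 : ℝ), mul_div_right_comm]
      gcongr
      exact hdist n 0 Real.pi
  refine ⟨p, fun θ ↦ hp.congr_dist <| squeeze_zero (fun _ ↦ dist_nonneg) (fun n ↦ hdist n 0 θ) ?_⟩
  have hpow : Tendsto (fun n : ℕ ↦ (2 : ℝ) ^ n) atTop atTop :=
    tendsto_pow_atTop_atTop_of_one_lt one_lt_two
  simpa using (hpow.const_div_atTop (K : ℝ)).mul_const (dist 0 θ)

theorem exists_lipschitzWith_of_periodic {c : ℝ} (hc : c ≠ 0) (hf : ContDiff ℝ 1 f)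
    (hper : Function.Periodic f c) : ∃ K, LipschitzWith K f := by
  have hderiv : Function.Periodic (deriv f) c := fun θ ↦ by
    rw [← deriv_comp_add_const, hper.funext]
  obtain ⟨K, hK⟩ := (hderiv.isBounded_of_continuous hc (hf.continuous_deriv le_rfl)).exists_norm_le
  exact ⟨K.toNNReal, lipschitzWith_of_nnnorm_deriv_le (hf.differentiable one_ne_zero) fun θ ↦
    NNReal.le_toNNReal_of_coe_le (hK _ (mem_range_self θ))⟩

end DyadicMean

section RingInverse

theorem inverse_one_sub_sq {R : Type*} [Ring R] {x : R} (h : IsUnit (1 - x)) :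
    Ring.inverse (1 - x ^ 2) = Ring.inverse (1 - x) * Ring.inverse (1 + x) := by
  rw [← Ring.inverse_mul (.inr h)]
  congr 1
  noncomm_ring

theorem inverse_one_sub_add_inverse_one_add {R : Type*} [Ring R] {x : R} (h₁ : IsUnit (1 - x))
    (h₂ : IsUnit (1 + x)) :
    Ring.inverse (1 - x) + Ring.inverse (1 + x) = 2 * Ring.inverse (1 - x ^ 2) := by
  rw [Ring.inverse_add_inverse (iff_of_true h₁ h₂), inverse_one_sub_sq h₁, sub_add_add_cancel,
    one_add_one_eq_two, mul_assoc, (Commute.ofNat_right _ 2).left_comm]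

theorem one_sub_mul_eq_neg_of_mul_eq_one {R : Type*} [Ring R] {u c : R} (h : u * (1 - c) = 1) :
    (1 - u) * (1 - c) = -c := by
  rw [_root_.sub_mul, h, one_mul, sub_sub_cancel_left]

theorem commute_inverse_right {M₀ : Type*} [MonoidWithZero M₀] {a b : M₀} (h : Commute a b) :
    Commute a (Ring.inverse b) := by
  by_cases hb : IsUnit b
  · obtain ⟨u, rfl⟩ := hb
    rw [Ring.inverse_unit]
    exact h.units_inv_right
  · rw [Ring.inverse_non_unit _ hb]
    exact Commute.zero_right a

end RingInverse

section ScalarMultiple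

variable {𝕜 A : Type*} [Field 𝕜] [Ring A] [Algebra 𝕜 A] {k : 𝕜}

theorem isUnit_smul_iff_of_ne_zero (hk : k ≠ 0) (a : A) : IsUnit (k • a) ↔ IsUnit a :=
  isUnit_smul_iff (Units.mk0 k hk) a

theorem spectrum_smul_of_ne_zero (hk : k ≠ 0) (a : A) : spectrum 𝕜 (k • a) = k • spectrum 𝕜 a :=
  spectrum.unit_smul_eq_smul a (Units.mk0 k hk)

end ScalarMultiple

section RieszIdempotent

variable {R : Type*} [NormedRing R] [NormedAlgebra ℂ R] {a : R}

/-- The resolvent of `a` along the unit circle, normalised as `(1 - e^{iθ} a)⁻¹`, and `0` where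
`1 - e^{iθ} a` is not invertible. -/
noncomputable def circleResolvent (a : R) (θ : ℝ) : R :=
  Ring.inverse (1 - Complex.exp (θ * Complex.I) • a)

theorem circleResolvent_zero (a : R) : circleResolvent a 0 = Ring.inverse (1 - a) := by
  simp [circleResolvent]

theorem periodic_circleResolvent (a : R) : Function.Periodic (circleResolvent a) (2 * Real.pi) := by
  intro θ
  have hexp : Complex.exp (↑(θ + 2 * Real.pi) * Complex.I) = Complex.exp (θ * Complex.I) := by
    push_cast
    rw [add_mul, Complex.exp_periodic]
  rw [circleResolvent, hexp, circleResolvent]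

theorem isUnit_one_sub_smul (ha : Disjoint (spectrum ℂ a) (sphere 0 1)) {w : ℂ} (hw : ‖w‖ = 1) :
    IsUnit (1 - w • a) := by
  have hw₀ : w ≠ 0 := norm_ne_zero_iff.1 (hw ▸ one_ne_zero)
  have hmem : w⁻¹ ∉ spectrum ℂ a := disjoint_right.1 ha (by simp [hw])
  rw [spectrum.notMem_iff] at hmem
  rwa [← isUnit_smul_iff_of_ne_zero hw₀, smul_sub, Algebra.algebraMap_eq_smul_one,
    smul_inv_smul₀ hw₀] at hmem

theorem circleResolvent_add_pi (a : R) (θ : ℝ) :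
    circleResolvent a (θ + Real.pi) = Ring.inverse (1 + Complex.exp (θ * Complex.I) • a) := by
  rw [circleResolvent, Complex.ofReal_add, add_mul, Complex.exp_add, Complex.exp_pi_mul_I,
    mul_neg_one, neg_smul, sub_neg_eq_add]

theorem exp_half_smul_sq (a : R) (θ : ℝ) :
    (Complex.exp (↑(θ / 2) * Complex.I) • a) ^ 2 = Complex.exp (θ * Complex.I) • a ^ 2 := by
  rw [smul_pow, ← Complex.exp_nat_mul]
  congr 2
  push_cast
  ring

theorem circleResolvent_sq (ha : Disjoint (spectrum ℂ a) (sphere 0 1)) (θ : ℝ) :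
    circleResolvent (a ^ 2) θ =
      circleResolvent a (θ / 2) * circleResolvent a (θ / 2 + Real.pi) := by
  have h := isUnit_one_sub_smul ha (Complex.norm_exp_ofReal_mul_I (θ / 2))
  rw [circleResolvent_add_pi, circleResolvent, circleResolvent, ← exp_half_smul_sq,
    inverse_one_sub_sq h]

theorem dyadicMean_circleResolvent (ha : Disjoint (spectrum ℂ a) (sphere 0 1)) :
    dyadicMean (circleResolvent a) = circleResolvent (a ^ 2) := by
  ext θ
  have hnorm := Complex.norm_exp_ofReal_mul_I (θ / 2)
  have hadd : IsUnit (1 + Complex.exp (↑(θ / 2) * Complex.I) • a) := by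
    simpa only [neg_smul, sub_neg_eq_add] using
      isUnit_one_sub_smul ha ((norm_neg _).trans hnorm)
  rw [dyadicMean, circleResolvent_add_pi, circleResolvent, circleResolvent, ← exp_half_smul_sq,
    inverse_one_sub_add_inverse_one_add (isUnit_one_sub_smul ha hnorm) hadd, two_mul,
    ← two_smul ℝ, inv_smul_smul₀ two_ne_zero]

theorem disjoint_spectrum_pow_sphere (ha : Disjoint (spectrum ℂ a) (sphere 0 1)) {n : ℕ}
    (hn : 0 < n) : Disjoint (spectrum ℂ (a ^ n)) (sphere 0 1) := by
  rw [spectrum.map_pow_of_pos a hn, disjoint_left]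
  rintro _ ⟨z, hz, rfl⟩ hzn
  rw [mem_sphere_zero_iff_norm, norm_pow, pow_eq_one_iff_of_nonneg (norm_nonneg z) hn.ne'] at hzn
  exact disjoint_left.1 ha hz (mem_sphere_zero_iff_norm.2 hzn)

theorem iterate_dyadicMean_circleResolvent (ha : Disjoint (spectrum ℂ a) (sphere 0 1)) (n : ℕ) :
    dyadicMean^[n] (circleResolvent a) = circleResolvent (a ^ 2 ^ n) := by
  induction n with
  | zero => simp
  | succ n ih =>
    rw [Function.iterate_succ_apply', ih, pow_succ, pow_mul]
    exact dyadicMean_circleResolvent (disjoint_spectrum_pow_sphere ha (by positivity))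

variable [CompleteSpace R]

theorem contDiff_circleResolvent (ha : Disjoint (spectrum ℂ a) (sphere 0 1)) :
    ContDiff ℝ 1 (circleResolvent a) := by
  refine contDiff_iff_contDiffAt.2 fun θ ↦ ?_
  have hinv := contDiffAt_ringInverse ℝ (n := 1)
    (isUnit_one_sub_smul ha (Complex.norm_exp_ofReal_mul_I θ)).unit
  refine hinv.comp θ (f := fun θ : ℝ ↦ 1 - Complex.exp (θ * Complex.I) • a) ?_
  have : ContDiff ℝ 1 fun θ : ℝ ↦ (θ : ℂ) := Complex.ofRealCLM.contDiff
  fun_prop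

theorem exists_isIdempotentElem_tendsto_inverse (ha : Disjoint (spectrum ℂ a) (sphere 0 1)) :
    ∃ p : R, IsIdempotentElem p ∧ (∀ b, Commute b a → Commute b p) ∧
      Tendsto (fun n : ℕ ↦ Ring.inverse (1 - a ^ 2 ^ n)) atTop (𝓝 p) := by
  obtain ⟨K, hK⟩ := exists_lipschitzWith_of_periodic Real.two_pi_pos.ne'
    (contDiff_circleResolvent ha) (periodic_circleResolvent a)
  obtain ⟨p, hp⟩ := exists_tendsto_iterate_dyadicMean hK
  simp only [iterate_dyadicMean_circleResolvent ha] at hp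
  have hp₀ : Tendsto (fun n : ℕ ↦ Ring.inverse (1 - a ^ 2 ^ n)) atTop (𝓝 p) := by
    simpa only [circleResolvent_zero] using hp 0
  have hmul (n : ℕ) : circleResolvent (a ^ 2 ^ n) 0 * circleResolvent (a ^ 2 ^ n) Real.pi =
      circleResolvent (a ^ 2 ^ (n + 1)) 0 := by
    rw [pow_succ 2, pow_mul, circleResolvent_sq (disjoint_spectrum_pow_sphere ha (by positivity)),
      _root_.zero_div, _root_.zero_add]
  refine ⟨p, ?_, fun b hb ↦ ?_, hp₀⟩
  -- The products of the values at `0` and at `π` tend to `p * p`, but are again values at `0`.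
  · refine tendsto_nhds_unique ((hp 0).mul (hp Real.pi)) ?_
    simp only [hmul]
    exact (hp 0).comp (tendsto_add_atTop_nat 1)
  · have hcomm (n : ℕ) : Commute b (Ring.inverse (1 - a ^ 2 ^ n)) :=
      commute_inverse_right ((Commute.one_right b).sub_right (hb.pow_right _))
    refine tendsto_nhds_unique (hp₀.const_mul b) ?_
    simpa only [(hcomm _).eq] using hp₀.mul_const b

end RieszIdempotent

section PowerResolvent

variable {R : Type*} [NormedRing R] [CompleteSpace R] {b v : R} {n : ℕ}

theorem isUnit_of_norm_inverse_one_sub_pow_lt (hn : n ≠ 0) (hl : v * (1 - b ^ n) = 1)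
    (hr : (1 - b ^ n) * v = 1) (hv : ‖v‖ < 1) : IsUnit b := by
  have hpow : b ^ n = -((1 - v) * (1 - b ^ n)) := by
    rw [one_sub_mul_eq_neg_of_mul_eq_one hl, neg_neg]
  have hunit : IsUnit (1 - b ^ n) := ⟨⟨_, v, hr, hl⟩, rfl⟩
  rw [← isUnit_pow_iff hn, hpow]
  exact ((isUnit_one_sub_of_norm_lt_one hv).mul hunit).neg

theorem spectrum_subset_ball_of_norm_one_sub_inverse_lt [NormedAlgebra ℂ R]
    (hl : v * (1 - b ^ n) = 1) (hr : (1 - b ^ n) * v = 1) (hv : ‖1 - v‖ < 1 / 2) :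
    spectrum ℂ b ⊆ ball 0 1 := by
  intro w hw
  by_contra hw₁
  rw [mem_ball_zero_iff, not_lt] at hw₁
  have hz₁ : ‖(w ^ n)⁻¹‖ ≤ 1 := by
    rw [norm_inv, norm_pow]
    exact inv_le_one_of_one_le₀ (one_le_pow₀ hw₁)
  have hz₀ : w ^ n ≠ 0 := pow_ne_zero n (norm_pos_iff.1 (one_pos.trans_le hw₁))
  have hnorm : ‖(1 - (w ^ n)⁻¹) • (1 - v)‖ < 1 := by
    calc ‖(1 - (w ^ n)⁻¹) • (1 - v)‖ ≤ (‖(1 : ℂ)‖ + ‖(w ^ n)⁻¹‖) * ‖1 - v‖ := by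
          rw [norm_smul]
          gcongr
          exact norm_sub_le _ _
      _ ≤ 2 * ‖1 - v‖ := by
          gcongr
          rw [norm_one]
          linarith
      _ < 1 := by linarith
  -- With `z = w ^ n` and `c = b ^ n`: `z - c = z (1 - z⁻¹ c)`, where
  -- `1 - z⁻¹ c = (1 - c) + (1 - z⁻¹) c` and `c = -(1 - v) (1 - c)`.
  have hfactor : algebraMap ℂ R (w ^ n) - b ^ n =
      w ^ n • ((1 - (1 - (w ^ n)⁻¹) • (1 - v)) * (1 - b ^ n)) := by
    rw [_root_.sub_mul, smul_mul_assoc, one_sub_mul_eq_neg_of_mul_eq_one hl, one_mul, smul_sub,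
      smul_sub, smul_smul, _root_.mul_sub, mul_inv_cancel₀ hz₀, mul_one, sub_smul, one_smul,
      smul_neg, Algebra.algebraMap_eq_smul_one]
    abel
  refine spectrum.mem_iff.1 (spectrum.pow_mem_pow b n hw) ?_
  have hunit : IsUnit (1 - b ^ n) := ⟨⟨_, v, hr, hl⟩, rfl⟩
  rw [hfactor, isUnit_smul_iff_of_ne_zero hz₀]
  exact (isUnit_one_sub_of_norm_lt_one hnorm).mul hunit

end PowerResolvent

section ReducingPair

variable {E : Type*} [NormedAddCommGroup E] [NormedSpace ℂ E] {T P : E →L[ℂ] E}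
  {K M N : Submodule ℂ E}

/-- The algebra of bounded operators leaving `K` invariant, on which restriction to `K` is an
algebra homomorphism. -/
def invtOperators (K : Submodule ℂ E) : Subalgebra ℂ (E →L[ℂ] E) where
  carrier := {T | ∀ x ∈ K, T x ∈ K}
  mul_mem' hS hT x hx := hS _ (hT x hx)
  add_mem' hS hT x hx := K.add_mem (hS x hx) (hT x hx)
  algebraMap_mem' z _ hx := K.smul_mem z hx

/-- Restriction to `K` as an algebra homomorphism. -/
noncomputable def restrHom (K : Submodule ℂ E) : invtOperators K →ₐ[ℂ] K →L[ℂ] K where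
  toFun T := restr (T : E →L[ℂ] E) K T.2
  map_one' := rfl
  map_mul' _ _ := rfl
  map_zero' := rfl
  map_add' _ _ := rfl
  commutes' _ := rfl

theorem norm_restr_le_of_eqOn (hT : ∀ x ∈ K, T x ∈ K) {S : E →L[ℂ] E} (h : EqOn T S K) :
    ‖restr T K hT‖ ≤ ‖S‖ :=
  ContinuousLinearMap.opNorm_le_bound _ (norm_nonneg S) fun x ↦
    (congrArg norm (h x.2)).trans_le (S.le_opNorm x)

section PowerResolvent

variable {V : E →L[ℂ] E} {n : ℕ}

theorem restr_mul_one_sub_pow (hT : ∀ x ∈ K, T x ∈ K) (hV : ∀ x ∈ K, V x ∈ K)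
    (h : V * (1 - T ^ n) = 1) : restr V K hV * (1 - restr T K hT ^ n) = 1 := by
  have h' : (⟨V, hV⟩ : invtOperators K) * (1 - ⟨T, hT⟩ ^ n) = 1 := Subtype.ext h
  have hmap := congrArg (restrHom K) h'
  rwa [map_mul, map_sub, map_pow, map_one] at hmap

theorem one_sub_pow_mul_restr (hT : ∀ x ∈ K, T x ∈ K) (hV : ∀ x ∈ K, V x ∈ K)
    (h : (1 - T ^ n) * V = 1) : (1 - restr T K hT ^ n) * restr V K hV = 1 := by
  have h' : (1 - ⟨T, hT⟩ ^ n) * (⟨V, hV⟩ : invtOperators K) = 1 := Subtype.ext h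
  have hmap := congrArg (restrHom K) h'
  rwa [map_mul, map_sub, map_pow, map_one] at hmap

theorem isUnit_restr_of_norm_lt [CompleteSpace K] (hT : ∀ x ∈ K, T x ∈ K)
    (hV : ∀ x ∈ K, V x ∈ K) (hn : n ≠ 0) (hl : V * (1 - T ^ n) = 1) (hr : (1 - T ^ n) * V = 1)
    {S : E →L[ℂ] E} (hS : EqOn V S K) (hnorm : ‖S‖ < 1) : IsUnit (restr T K hT) :=
  isUnit_of_norm_inverse_one_sub_pow_lt (R := K →L[ℂ] K) hn (restr_mul_one_sub_pow hT hV hl)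
    (one_sub_pow_mul_restr hT hV hr) ((norm_restr_le_of_eqOn hV hS).trans_lt hnorm)

theorem spectrum_restr_subset_ball_of_norm_lt [CompleteSpace K] (hT : ∀ x ∈ K, T x ∈ K)
    (hV : ∀ x ∈ K, V x ∈ K) (hl : V * (1 - T ^ n) = 1) (hr : (1 - T ^ n) * V = 1)
    {S : E →L[ℂ] E} (hS : EqOn (1 - V : E →L[ℂ] E) S K) (hnorm : ‖S‖ < 1 / 2) :
    spectrum ℂ (restr T K hT) ⊆ ball 0 1 :=
  spectrum_subset_ball_of_norm_one_sub_inverse_lt (R := K →L[ℂ] K)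
    (restr_mul_one_sub_pow hT hV hl) (one_sub_pow_mul_restr hT hV hr) <|
    (norm_restr_le_of_eqOn (sub_mem (one_mem (invtOperators K)) hV) hS).trans_lt hnorm

end PowerResolvent

/-- `(M, N) ∈ Red(T)`: the pairs of subspaces over which `GInv` quantifies. -/
structure IsReducingPair (T : E →L[ℂ] E) (M N : Submodule ℂ E) : Prop where
  invt_left : ∀ x ∈ M, T x ∈ M
  invt_right : ∀ x ∈ N, T x ∈ N
  isClosed_left : IsClosed (M : Set E)
  isClosed_right : IsClosed (N : Set E)
  isCompl : IsCompl M N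

theorem gInv_iff_exists_isReducingPair {β : Ordinal} : GInv β T ↔
    ∃ (M N : Submodule ℂ E) (h : IsReducingPair T M N), IsUnit (restr T M h.invt_left) ∧
      cbd (spectrum ℂ (restr T N h.invt_right)) β ⊆ {0} :=
  ⟨fun ⟨M, N, hM, hN, hMc, hNc, hMN, h⟩ ↦ ⟨M, N, ⟨hM, hN, hMc, hNc, hMN⟩, h⟩,
    fun ⟨M, N, ⟨hM, hN, hMc, hNc, hMN⟩, h⟩ ↦ ⟨M, N, hM, hN, hMc, hNc, hMN, h⟩⟩

namespace IsReducingPair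

theorem smul (h : IsReducingPair T M N) (c : ℂ) : IsReducingPair (c • T) M N :=
  { h with
    invt_left := (invtOperators M).smul_mem h.invt_left c
    invt_right := (invtOperators N).smul_mem h.invt_right c }

theorem algebraMap_sub (h : IsReducingPair T M N) (z : ℂ) :
    IsReducingPair (algebraMap ℂ (E →L[ℂ] E) z - T) M N :=
  { h with
    invt_left := sub_mem ((invtOperators M).algebraMap_mem z) h.invt_left
    invt_right := sub_mem ((invtOperators N).algebraMap_mem z) h.invt_right }

theorem of_isIdempotentElem (hP : IsIdempotentElem P) (hPT : Commute P T) :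
    IsReducingPair T P.ker P.range :=
  have hinvt := (ContinuousLinearMap.IsIdempotentElem.commute_iff hP).1 hPT
  { invt_left := hinvt.2
    invt_right := hinvt.1
    isClosed_left := P.isClosed_ker
    isClosed_right := ContinuousLinearMap.IsIdempotentElem.isClosed_range hP
    isCompl := (ContinuousLinearMap.IsIdempotentElem.isTopCompl hP).isCompl.symm }

variable [CompleteSpace E]

theorem completeSpace_left (h : IsReducingPair T M N) : CompleteSpace M :=
  h.isClosed_left.completeSpace_coe

theorem completeSpace_right (h : IsReducingPair T M N) : CompleteSpace N :=
  h.isClosed_right.completeSpace_coe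

theorem isUnit_iff (h : IsReducingPair T M N) :
    IsUnit T ↔ IsUnit (restr T M h.invt_left) ∧ IsUnit (restr T N h.invt_right) := by
  have := h.completeSpace_left
  have := h.completeSpace_right
  let e := M.prodEquivOfIsCompl N h.isCompl
  have hconj : T ∘ e = e ∘ Prod.map (restr T M h.invt_left) (restr T N h.invt_right) := by
    ext x
    exact map_add T _ _
  rw [ContinuousLinearMap.isUnit_iff_bijective, ContinuousLinearMap.isUnit_iff_bijective,
    ContinuousLinearMap.isUnit_iff_bijective, ← Prod.map_bijective,
    ← e.bijective.of_comp_iff, hconj, e.bijective.of_comp_iff']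

theorem spectrum_eq (h : IsReducingPair T M N) : spectrum ℂ T =
    spectrum ℂ (restr T M h.invt_left) ∪ spectrum ℂ (restr T N h.invt_right) := by
  ext z
  rw [mem_union, spectrum.mem_iff, (h.algebraMap_sub z).isUnit_iff, not_and_or]
  rfl

end IsReducingPair

variable [CompleteSpace E]

theorem exists_isReducingPair_of_disjoint_unit_sphere
    (hT : Disjoint (spectrum ℂ T) (sphere 0 1)) :
    ∃ (M N : Submodule ℂ E) (h : IsReducingPair T M N), IsUnit (restr T M h.invt_left) ∧
      spectrum ℂ (restr T N h.invt_right) ⊆ ball 0 1 := by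
  obtain ⟨P, hP, hcomm, hlim⟩ := exists_isIdempotentElem_tendsto_inverse hT
  obtain ⟨n, hn⟩ :=
    ((tendsto_order.1 (tendsto_iff_dist_tendsto_zero.1 hlim)).2 _ one_half_pos).exists
  set V := Ring.inverse (1 - T ^ 2 ^ n)
  rw [dist_eq_norm] at hn
  have hunit : IsUnit (1 - T ^ 2 ^ n) := by
    simpa only [one_smul] using
      isUnit_one_sub_smul (disjoint_spectrum_pow_sphere hT (by positivity)) norm_one
  have hVT : Commute V T :=
    (commute_inverse_right ((Commute.one_right T).sub_right (.pow_right rfl _))).symm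
  have hredT := IsReducingPair.of_isIdempotentElem hP (hcomm T rfl).symm
  have hredV := IsReducingPair.of_isIdempotentElem hP (hcomm V hVT).symm
  have hl := Ring.inverse_mul_cancel _ hunit
  have hr := Ring.mul_inverse_cancel _ hunit
  have hker : EqOn V (V - P : E →L[ℂ] E) P.ker := fun x (hx : P x = 0) ↦ by
    rw [_root_.sub_apply, hx, _root_.sub_zero]
  have hrange : EqOn (1 - V : E →L[ℂ] E) (P - V : E →L[ℂ] E) P.range := fun x hx ↦ by
    have hPx : P x = x :=
      (LinearMap.IsIdempotentElem.mem_range_iff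
        (ContinuousLinearMap.IsIdempotentElem.toLinearMap hP)).1 hx
    rw [_root_.sub_apply, _root_.sub_apply, hPx, one_apply_eq_self]
  have := hredT.completeSpace_left
  have := hredT.completeSpace_right
  refine ⟨P.ker, P.range, hredT, ?_, ?_⟩
  · exact isUnit_restr_of_norm_lt _ hredV.invt_left (pow_ne_zero n two_ne_zero) hl hr hker
      (hn.trans one_half_lt_one)
  · exact spectrum_restr_subset_ball_of_norm_lt _ hredV.invt_right hl hr hrange
      (norm_sub_rev V P ▸ hn)

theorem exists_isReducingPair_of_disjoint_sphere {s : ℝ} (hs : 0 < s)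
    (hT : Disjoint (spectrum ℂ T) (sphere 0 s)) :
    ∃ (M N : Submodule ℂ E) (h : IsReducingPair T M N), IsUnit (restr T M h.invt_left) ∧
      spectrum ℂ (restr T N h.invt_right) ⊆ ball 0 s := by
  have hs₀ : (s : ℂ) ≠ 0 := Complex.ofReal_ne_zero.2 hs.ne'
  have hc : (s : ℂ)⁻¹ ≠ 0 := inv_ne_zero hs₀
  have hcs : ‖(s : ℂ)⁻¹‖ * s = 1 := by
    rw [norm_inv, Complex.norm_of_nonneg hs.le, inv_mul_cancel₀ hs.ne']
  have hsphere : (s : ℂ)⁻¹ • sphere (0 : ℂ) s = sphere 0 1 := by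
    rw [smul_sphere' hc, smul_zero, hcs]
  have hball : (s : ℂ)⁻¹ • ball (0 : ℂ) s = ball 0 1 := by
    rw [_root_.smul_ball hc, smul_zero, hcs]
  have hunit : Disjoint (spectrum ℂ ((s : ℂ)⁻¹ • T)) (sphere 0 1) := by
    rwa [spectrum_smul_of_ne_zero hc, ← hsphere, ← image_smul, ← image_smul,
      disjoint_image_iff (smul_right_injective ℂ hc)]
  obtain ⟨M, N, h, hM, hN⟩ := exists_isReducingPair_of_disjoint_unit_sphere hunit
  have hMN : IsReducingPair T M N := by simpa only [smul_inv_smul₀ hs₀] using h.smul s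
  refine ⟨M, N, hMN, (isUnit_smul_iff_of_ne_zero hc _).1 hM, ?_⟩
  rw [← smul_set_subset_smul_set_iff₀ hc, hball, ← spectrum_smul_of_ne_zero hc]
  exact hN

theorem gInv_iff {β : Ordinal} : GInv β T ↔ 0 ∉ cbd (spectrum ℂ T) (β + 1) := by
  rw [gInv_iff_exists_isReducingPair]
  constructor
  · rintro ⟨M, N, h, hM, hN⟩
    have := h.completeSpace_left
    have := h.completeSpace_right
    have hMclosed := spectrum.isClosed (𝕜 := ℂ) (restr T M h.invt_left)
    have hNclosed := spectrum.isClosed (𝕜 := ℂ) (restr T N h.invt_right)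
    rw [h.spectrum_eq, cbd_union hMclosed hNclosed, mem_union, not_or]
    refine ⟨fun h₀ ↦ (spectrum.zero_notMem_iff ℂ).2 hM (cbd_subset hMclosed _ h₀), fun h₀ ↦ ?_⟩
    rw [cbd_add_one] at h₀
    exact Set.Infinite.of_accPt h₀ ((finite_singleton 0).subset hN)
  · intro h₀
    obtain ⟨s, hs, hdisj, hball⟩ :=
      exists_sphere_disjoint_of_zero_notMem_cbd (spectrum.isClosed T) h₀
    obtain ⟨M, N, h, hM, hN⟩ := exists_isReducingPair_of_disjoint_sphere hs hdisj
    have := h.completeSpace_right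
    have hNclosed := spectrum.isClosed (𝕜 := ℂ) (restr T N h.invt_right)
    refine ⟨M, N, h, hM, (subset_inter ?_ ?_).trans hball⟩
    · exact cbd_mono (subset_union_right.trans_eq h.spectrum_eq.symm) β
    · exact (cbd_subset hNclosed β).trans hN

end ReducingPair

/-- `T` is `g_σ^{β+1}`-invertible iff `T^m` is `g_σ^{β+1}`-invertible, for `m ≥ 1`. -/
theorem gInv_pow_iff (T : X →L[ℂ] X) (β : Ordinal) (m : ℕ) (hm : 1 ≤ m) :
    GInv β T ↔ GInv β (T ^ m) := by
  have hm₀ : m ≠ 0 := Nat.one_le_iff_ne_zero.1 hm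
  rw [gInv_iff, gInv_iff, spectrum.map_pow_of_pos T hm,
    cbd_image (spectrum.isCompact T) (continuous_pow m) (eventually_pow_ne_pow hm₀)]
  simp [hm₀]
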